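/- arXiv:2107.01689 — 2 statements merged into one kernel-verified Lean document; each statement's English description precedes it below -/
import Mathlib

section
/- The max regret of a reward-maximizing policy can be arbitrarily large compared to a minimax regret-optimal policy: for every R > 0 the gap (sup over p of L_R(1, p)) − (min over a ∈ [0,1] of sup over p of L_R(a, p)) equals R/2, and consequently for every M > 0 there exists R > 0 for which this gap exceeds M. -/
/-- Nature's parameter space: the unit square `[0,1] × [0,1]`. -/
def unitSq : Set (ℝ × ℝ) := Set.Icc 0 1 ×ˢ Set.Icc 0 1

/-- Agent's expected reward `G_R(a, p) = R·(a·p_A + (1 − a)·p_B)`. -/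
noncomputable def reward (R a : ℝ) (p : ℝ × ℝ) : ℝ := R * (a * p.1 + (1 - a) * p.2)

/-- Regret `L_R(a, p) = R·max(p_A, p_B) − G_R(a, p)`. -/
noncomputable def regret (R a : ℝ) (p : ℝ × ℝ) : ℝ := R * max p.1 p.2 - reward R a p

/-- Max regret of policy `a`: `sup_{p ∈ [0,1]²} L_R(a, p)`. -/
noncomputable def maxRegret (R a : ℝ) : ℝ := sSup (regret R a '' unitSq)

/-- Minimax regret: `min_{a ∈ [0,1]} maxRegret R a`. -/
noncomputable def minimaxRegret (R : ℝ) : ℝ := sInf ((fun a => maxRegret R a) '' Set.Icc (0 : ℝ) 1)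

theorem maxRegret_eq (R a : ℝ) (hR : 0 < R) (ha : a ∈ Set.Icc (0 : ℝ) 1) :
    maxRegret R a = R * max a (1 - a) := by
  obtain ⟨h0, h1⟩ := ha
  apply IsGreatest.csSup_eq
  constructor
  · rcases le_total a (1 - a) with h | h
    · refine ⟨(1, 0), ⟨by simp, by simp⟩, ?_⟩
      rw [max_eq_right h]
      simp [regret, reward]
      ring
    · refine ⟨(0, 1), ⟨by simp, by simp⟩, ?_⟩
      rw [max_eq_left h]
      simp [regret, reward]
      ring
  · rintro _ ⟨⟨x, y⟩, ⟨⟨hx0, hx1⟩, ⟨hy0, hy1⟩⟩, rfl⟩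
    simp only at hx0 hx1 hy0 hy1
    simp only [regret, reward]
    rw [← mul_sub]
    apply mul_le_mul_of_nonneg_left _ hR.le
    rcases le_total x y with h | h
    · rw [max_eq_right h]
      refine le_trans ?_ (le_max_left _ _)
      nlinarith [mul_nonneg h0 hx0, mul_nonneg h0 (sub_nonneg.2 hy1)]
    · rw [max_eq_left h]
      refine le_trans ?_ (le_max_right _ _)
      nlinarith [mul_nonneg (sub_nonneg.2 h1) hy0,
        mul_nonneg (sub_nonneg.2 h1) (sub_nonneg.2 hx1)]

theorem minimaxRegret_eq (R : ℝ) (hR : 0 < R) : minimaxRegret R = R / 2 := by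
  apply IsLeast.csInf_eq
  constructor
  · refine ⟨1 / 2, ⟨by norm_num, by norm_num⟩, ?_⟩
    simp only
    rw [maxRegret_eq R _ hR ⟨by norm_num, by norm_num⟩]
    norm_num
    ring
  · rintro _ ⟨a, ha, rfl⟩
    simp only
    rw [maxRegret_eq R a hR ha]
    have h : 1 / 2 ≤ max a (1 - a) := by
      have := le_max_left a (1 - a)
      have := le_max_right a (1 - a)
      linarith
    nlinarith [mul_le_mul_of_nonneg_left h hR.le]

theorem gap_eq (R : ℝ) (hR : 0 < R) : maxRegret R 1 - minimaxRegret R = R / 2 := by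
  rw [maxRegret_eq R 1 hR ⟨by norm_num, le_rfl⟩, minimaxRegret_eq R hR]
  norm_num
  ring

/-- the max regret of the reward-maximizing policy `a = 1` exceeds the minimax
regret by exactly `R/2`, so the gap can be made arbitrarily large. -/
theorem reward_maximizing_gap :
    (∀ R : ℝ, 0 < R → maxRegret R 1 - minimaxRegret R = R / 2) ∧
    (∀ M : ℝ, 0 < M → ∃ R : ℝ, 0 < R ∧ M < maxRegret R 1 - minimaxRegret R) := by
  refine ⟨gap_eq, fun M hM => ⟨4 * M, by linarith, ?_⟩⟩
  rw [gap_eq _ (by linarith)]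
  linarith
end

section
/- Finite convergence of the double oracle to a minimax regret-optimal policy (Proposition 3): suppose given sequences of nonempty finite subsets Π_k ⊆ Π and Ω_k ⊆ Ω, mixed strategies σ_k on Π_k and τ_k on Ω_k such that (σ_k, τ_k) is a Nash equilibrium of the restricted regret game on Π_k × Ω_k, and pure best responses π_k ∈ Π attaining min over π ∈ Π of Σ_ω τ_k(ω)·u(π, ω) and ω_k ∈ Ω attaining max over ω ∈ Ω of Σ_π σ_k(π)·u(π, ω), with Π_{k+1} = Π_k ∪ {π_k} and Ω_{k+1} = Ω_k ∪ {ω_k}. Then there exists k ≤ |Π| + |Ω| such that (σ_k, τ_k) is a Nash equilibrium of the full regret game; in particular σ_k is minimax regret-optimal: max over ω ∈ Ω of Σ_π σ_k(π)·u(π, ω) = min over all mixed strategies σ on Π of max over ω ∈ Ω of Σ_π σ(π)·u(π, ω). -/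
/-- A mixed strategy supported on the subset `S` of a finite type: nonnegative weights
summing to 1 that vanish outside `S`. -/
def IsMixedOn {α : Type*} [Fintype α] (S : Finset α) (σ : α → ℝ) : Prop :=
  (∀ x, 0 ≤ σ x) ∧ (∑ x, σ x = 1) ∧ ∀ x ∉ S, σ x = 0

/-- Expected regret `U(σ, τ) = Σ_{π, ω} σ(π)·τ(ω)·u(π, ω)` of mixed strategies. -/
def expRegret {P O : Type*} [Fintype P] [Fintype O] (u : P → O → ℝ)
    (σ : P → ℝ) (τ : O → ℝ) : ℝ :=
  ∑ π, ∑ ω, σ π * τ ω * u π ω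

/-- `(σ, τ)` is a Nash equilibrium of the regret game restricted to `P' × O'`. -/
def NashOn {P O : Type*} [Fintype P] [Fintype O] (u : P → O → ℝ)
    (P' : Finset P) (O' : Finset O) (σ : P → ℝ) (τ : O → ℝ) : Prop :=
  IsMixedOn P' σ ∧ IsMixedOn O' τ ∧
    (∀ τ', IsMixedOn O' τ' → expRegret u σ τ' ≤ expRegret u σ τ) ∧
    (∀ σ', IsMixedOn P' σ' → expRegret u σ τ ≤ expRegret u σ' τ)

theorem expRegret_left {P O : Type*} [Fintype P] [Fintype O] (u : P → O → ℝ)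
    (σ : P → ℝ) (τ : O → ℝ) : expRegret u σ τ = ∑ π, σ π * ∑ ω, τ ω * u π ω := by
  simp only [expRegret, Finset.mul_sum, mul_assoc]

theorem expRegret_right {P O : Type*} [Fintype P] [Fintype O] (u : P → O → ℝ)
    (σ : P → ℝ) (τ : O → ℝ) : expRegret u σ τ = ∑ ω, τ ω * ∑ π, σ π * u π ω := by
  unfold expRegret
  rw [Finset.sum_comm]
  simp only [Finset.mul_sum]
  refine Finset.sum_congr rfl fun _ _ => Finset.sum_congr rfl fun _ _ => by ring

theorem IsMixedOn.avg_le {α : Type*} [Fintype α] {S : Finset α} {σ : α → ℝ}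
    (h : IsMixedOn S σ) {f : α → ℝ} {c : ℝ} (hf : ∀ x, f x ≤ c) : ∑ x, σ x * f x ≤ c := by
  calc ∑ x, σ x * f x ≤ ∑ x, σ x * c :=
        Finset.sum_le_sum fun x _ => mul_le_mul_of_nonneg_left (hf x) (h.1 x)
    _ = c := by rw [← Finset.sum_mul, h.2.1, one_mul]

theorem IsMixedOn.le_avg {α : Type*} [Fintype α] {S : Finset α} {σ : α → ℝ}
    (h : IsMixedOn S σ) {f : α → ℝ} {c : ℝ} (hf : ∀ x, c ≤ f x) : c ≤ ∑ x, σ x * f x := by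
  calc c = ∑ x, σ x * c := by rw [← Finset.sum_mul, h.2.1, one_mul]
    _ ≤ ∑ x, σ x * f x :=
        Finset.sum_le_sum fun x _ => mul_le_mul_of_nonneg_left (hf x) (h.1 x)

theorem isMixedOn_pure {α : Type*} [Fintype α] [DecidableEq α] {S : Finset α} {a : α}
    (ha : a ∈ S) : IsMixedOn S (fun x => if x = a then (1 : ℝ) else 0) := by
  refine ⟨fun x => ?_, by simp, fun x hx => ?_⟩
  · dsimp only
    split_ifs <;> norm_num
  · have : x ≠ a := fun h => hx (h ▸ ha)
    simp [this]

/-- finite convergence of the double oracle to a minimax regret-optimal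
policy (Proposition 3). Given restricted Nash equilibria `(σ_k, τ_k)` on `Π_k × Ω_k`,
pure best responses `π_k`, `ω_k` over the full strategy spaces, and
`Π_{k+1} = Π_k ∪ {π_k}`, `Ω_{k+1} = Ω_k ∪ {ω_k}`, there is `k ≤ |Π| + |Ω|` such that
`(σ_k, τ_k)` is a Nash equilibrium of the full regret game; in particular `σ_k` is
minimax regret-optimal. -/
theorem double_oracle_finite_convergence {P O : Type*} [Fintype P] [Fintype O]
    [Nonempty P] [Nonempty O] [DecidableEq P] [DecidableEq O] (u : P → O → ℝ)
    (Pk : ℕ → Finset P) (Ok : ℕ → Finset O)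
    (σk : ℕ → P → ℝ) (τk : ℕ → O → ℝ) (πb : ℕ → P) (ωb : ℕ → O)
    (hNash : ∀ k, NashOn u (Pk k) (Ok k) (σk k) (τk k))
    (hπb : ∀ k, ∀ π : P, ∑ ω, τk k ω * u (πb k) ω ≤ ∑ ω, τk k ω * u π ω)
    (hωb : ∀ k, ∀ ω : O, ∑ π, σk k π * u π ω ≤ ∑ π, σk k π * u π (ωb k))
    (hPk : ∀ k, Pk (k + 1) = insert (πb k) (Pk k))
    (hOk : ∀ k, Ok (k + 1) = insert (ωb k) (Ok k)) :
    ∃ k ≤ Fintype.card P + Fintype.card O,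
      NashOn u Finset.univ Finset.univ (σk k) (τk k) ∧
      Finset.univ.sup' Finset.univ_nonempty (fun ω : O => ∑ π, σk k π * u π ω) =
        sInf {x : ℝ | ∃ σ : P → ℝ, IsMixedOn Finset.univ σ ∧
          x = Finset.univ.sup' Finset.univ_nonempty (fun ω : O => ∑ π, σ π * u π ω)} := by
  obtain ⟨k, hk, hP, hO⟩ : ∃ k ≤ Fintype.card P + Fintype.card O,
      πb k ∈ Pk k ∧ ωb k ∈ Ok k := by
    by_contra hcon
    push Not at hcon
    have key : ∀ k ≤ Fintype.card P + Fintype.card O + 1,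
        k ≤ (Pk k).card + (Ok k).card := by
      intro k
      induction k with
      | zero => intro _; exact Nat.zero_le _
      | succ k ih =>
        intro hk
        have h1 := ih (by omega)
        have h2 := hcon k (by omega)
        rw [hPk, hOk]
        by_cases hp : πb k ∈ Pk k
        · rw [Finset.insert_eq_of_mem hp, Finset.card_insert_of_notMem (h2 hp)]
          omega
        · rw [Finset.card_insert_of_notMem hp]
          have := Finset.card_le_card (Finset.subset_insert (ωb k) (Ok k))
          omega
    have h1 := key _ le_rfl
    have h2 := Finset.card_le_univ (Pk (Fintype.card P + Fintype.card O + 1))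
    have h3 := Finset.card_le_univ (Ok (Fintype.card P + Fintype.card O + 1))
    omega
  obtain ⟨hσ, hτ, hN1, hN2⟩ := hNash k
  have hσ' : IsMixedOn Finset.univ (σk k) := ⟨hσ.1, hσ.2.1, by simp⟩
  have hτ' : IsMixedOn Finset.univ (τk k) := ⟨hτ.1, hτ.2.1, by simp⟩
  have hf : ∀ ω, ∑ π, σk k π * u π ω ≤ expRegret u (σk k) (τk k) := by
    intro ω
    have h := hN1 _ (isMixedOn_pure hO)
    rw [expRegret_right u (σk k) (fun x => if x = ωb k then (1 : ℝ) else 0)] at h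
    simp only [ite_mul, one_mul, zero_mul, Finset.sum_ite_eq', Finset.mem_univ, if_true] at h
    exact (hωb k ω).trans h
  have hg : ∀ π, expRegret u (σk k) (τk k) ≤ ∑ ω, τk k ω * u π ω := by
    intro π
    have h := hN2 _ (isMixedOn_pure hP)
    rw [expRegret_left u (fun x => if x = πb k then (1 : ℝ) else 0)] at h
    simp only [ite_mul, one_mul, zero_mul, Finset.sum_ite_eq', Finset.mem_univ, if_true] at h
    exact h.trans (hπb k π)
  have hlow : ∀ σ', IsMixedOn Finset.univ σ' →
      expRegret u (σk k) (τk k) ≤ expRegret u σ' (τk k) := by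
    intro σ' h
    rw [expRegret_left u σ']
    exact h.le_avg hg
  refine ⟨k, hk, ⟨hσ', hτ', ?_, hlow⟩, ?_⟩
  · intro τ' h
    rw [expRegret_right u _ τ']
    exact h.avg_le hf
  · symm
    apply IsLeast.csInf_eq
    refine ⟨⟨σk k, hσ', rfl⟩, ?_⟩
    rintro x ⟨σ', h, rfl⟩
    refine (Finset.sup'_le _ _ fun ω _ => hf ω).trans ((hlow σ' h).trans ?_)
    rw [expRegret_right]
    exact hτ.avg_le fun ω =>
      Finset.le_sup' (fun ω : O => ∑ π, σ' π * u π ω) (Finset.mem_univ ω)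
end
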